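/- Let x̃₁,…,x̃_L be i.i.d. samples of the form x̃_i = θ^S + σξ_i, where ξ_i ~ N(0, I_p), σ = 1/√λ, S is uniformly distributed over the collection 𝕊̃ of k-element subsets of [p] containing {1,…,k−1}, and θ^S(j) = (1/√k)·1{j ∈ S}. Then the mutual information between the samples and S satisfies I(X^L; S) ≤ Lλ/(2k), where X^L = (x̃₁,…,x̃_L). -/

import Mathlib

open MeasureTheory ProbabilityTheory
open scoped ENNReal NNReal

noncomputable section

/-- Kullback-Leibler divergence `KL(μ ‖ ν) = ∫ log (dμ/dν) dμ` (real-valued version). -/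
def klDivR {α : Type*} [MeasurableSpace α] (μ ν : Measure α) : ℝ :=
  ∫ x, Real.log ((μ.rnDeriv ν x).toReal) ∂μ

/-- Mutual information `I(x; S)` between a sample `x` with conditional law `κ S` and a
latent variable `S` uniformly distributed on the finite index type: the average KL
divergence between the conditional laws and the (uniform) mixture marginal. -/
def mutualInfoUnif {ι α : Type*} [Fintype ι] [MeasurableSpace α] (κ : ι → Measure α) : ℝ :=
  (Fintype.card ι : ℝ)⁻¹ *
    ∑ s : ι, klDivR (κ s) ((Fintype.card ι : ℝ≥0∞)⁻¹ • ∑ t : ι, κ t)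

/-- The collection `𝕊̃` of all `k`-element subsets of `Fin p` containing the first `k-1`
indices `{0, …, k-2}`. -/
def stildeF (p k : ℕ) : Finset (Finset (Fin p)) :=
  ((Finset.univ : Finset (Fin p)).powersetCard k).filter
    (fun T => ∀ i : Fin p, (i : ℕ) < k - 1 → i ∈ T)

/-- The vector `θ^T` with `θ^T(j) = 1/√k` for `j ∈ T` and `0` otherwise. -/
def thetaVec (p k : ℕ) (T : Finset (Fin p)) : Fin p → ℝ :=
  fun j => if j ∈ T then (Real.sqrt k)⁻¹ else 0

/-- The law of `L` i.i.d. samples `x̃ᵢ = θ^T + σ ξᵢ` with `σ = 1/√λ`, i.e. each sample is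
`N(θ^T, (1/λ) I_p)`, given the support `T`. -/
def labeledTildeLaw (p k L : ℕ) (lam : ℝ) (T : Finset (Fin p)) :
    Measure (Fin L → Fin p → ℝ) :=
  Measure.pi fun _ : Fin L =>
    Measure.pi fun j : Fin p => gaussianReal (thetaVec p k T j) (Real.toNNReal lam⁻¹)

/-!
For every reference law `Q`, the average of `KL(κ t ‖ Q)` over the labels `t` equals the mutual
information plus `KL(mixture ‖ Q)`, so a uniform bound on `KL(κ t ‖ Q)` bounds the mutual
information. Take for `Q` the Gaussian law centred at the vector supported on the indices that all
`T ∈ 𝕊̃` share: `θ^T` differs from this centre in a single coordinate, by `1/√k`, hence each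
divergence is exactly `L · (λ/2) · (1/k)`.
-/

section RelativeEntropy

open InformationTheory

variable {α : Type*} [MeasurableSpace α] {μ ν ρ : Measure α}

lemma toReal_klDiv_eq_klDivR [IsProbabilityMeasure μ] [IsProbabilityMeasure ν] (hμν : μ ≪ ν) :
    (klDiv μ ν).toReal = klDivR μ ν :=
  toReal_klDiv_of_measure_eq hμν (by simp only [measure_univ])

lemma llr_add_llr [SigmaFinite μ] [SigmaFinite ν] [SigmaFinite ρ] (hμν : μ ≪ ν) (hνρ : ν ≪ ρ) :
    llr μ ν + llr ν ρ =ᵐ[μ] llr μ ρ := by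
  filter_upwards [(hμν.trans hνρ).ae_le (Measure.rnDeriv_mul_rnDeriv (κ := ρ) hμν),
    Measure.rnDeriv_pos hμν, hμν.ae_le (Measure.rnDeriv_lt_top μ ν),
    hμν.ae_le (Measure.rnDeriv_pos hνρ), (hμν.trans hνρ).ae_le (Measure.rnDeriv_lt_top ν ρ)]
    with x h_mul hμν_pos hμν_top hνρ_pos hνρ_top
  simp only [Pi.add_apply, llr, ← h_mul, Pi.mul_apply, ENNReal.toReal_mul]
  exact (Real.log_mul (ENNReal.toReal_pos hμν_pos.ne' hμν_top.ne).ne'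
    (ENNReal.toReal_pos hνρ_pos.ne' hνρ_top.ne).ne').symm

lemma integrable_llr_of_le [IsFiniteMeasure ν] (h : μ ≤ ν) : Integrable (llr μ ν) μ := by
  have : IsFiniteMeasure μ := isFiniteMeasure_of_le ν h
  obtain ⟨C, hC⟩ : ∃ C, ∀ y ∈ Set.Icc (0 : ℝ) 1, ‖klFun y‖ ≤ C :=
    isCompact_Icc.exists_bound_of_continuousOn continuous_klFun.continuousOn
  rw [← integrable_klFun_rnDeriv_iff (Measure.absolutelyContinuous_of_le h)]
  refine Integrable.of_bound (C := C)
    (measurable_klFun.comp (Measure.measurable_rnDeriv μ ν).ennreal_toReal).aestronglyMeasurable ?_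
  filter_upwards [Measure.rnDeriv_le_one_of_le h] with x hx
  exact hC _ ⟨ENNReal.toReal_nonneg, ENNReal.toReal_le_of_le_ofReal zero_le_one (by simpa using hx)⟩

lemma integrable_llr_of_le_smul [IsFiniteMeasure μ] [IsFiniteMeasure ν] {c : ℝ≥0}
    (h : μ ≤ c • ν) : Integrable (llr μ ν) μ := by
  rcases eq_or_ne c 0 with rfl | hc
  · have hμ : μ = 0 := le_antisymm (by simpa using h) (Measure.zero_le μ)
    simp [hμ]
  have hμν : μ ≪ ν :=
    (Measure.absolutelyContinuous_of_le h).trans Measure.smul_absolutelyContinuous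
  have h_shift : llr μ (c • ν) + (fun _ ↦ Real.log c) =ᵐ[μ] llr μ ν := by
    filter_upwards [llr_smul_nnreal_right hμν c hc] with x hx
    simp [hx]
  exact ((integrable_llr_of_le h).add (integrable_const _)).congr h_shift

lemma klDiv_tilted_self [IsProbabilityMeasure μ] {f : α → ℝ}
    (h_exp : Integrable (fun x ↦ Real.exp (f x)) μ) (hf : Integrable f (μ.tilted f)) :
    klDiv (μ.tilted f) μ
      = ENNReal.ofReal (∫ x, f x ∂(μ.tilted f) - Real.log (∫ x, Real.exp (f x) ∂μ)) := by
  have : IsProbabilityMeasure (μ.tilted f) := isProbabilityMeasure_tilted h_exp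
  have h_ac : μ.tilted f ≪ μ := tilted_absolutelyContinuous μ f
  have h_llr : llr (μ.tilted f) μ
      =ᵐ[μ.tilted f] fun x ↦ f x - Real.log (∫ x, Real.exp (f x) ∂μ) :=
    h_ac.ae_le (log_rnDeriv_tilted_left_self h_exp)
  have h_int : Integrable (llr (μ.tilted f) μ) (μ.tilted f) :=
    (hf.sub (integrable_const _)).congr h_llr.symm
  rw [klDiv_of_ac_of_integrable h_ac h_int, integral_congr_ae h_llr,
    integral_sub hf (integrable_const _)]
  simp

end RelativeEntropy

section UniformMixture

open InformationTheory

variable {ι α : Type*} [Fintype ι] [MeasurableSpace α] {κ : ι → Measure α} {Q : Measure α}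

/-- The average `(1/|ι|) ∑ₜ κ t` of a finite family of measures: when `κ t` is the law of an
observation conditionally on a uniform label `t`, this is its marginal law. -/
def uniformMixture (κ : ι → Measure α) : Measure α :=
  (Fintype.card ι : ℝ≥0∞)⁻¹ • ∑ t, κ t

instance isProbabilityMeasure_uniformMixture [Nonempty ι] [∀ t, IsProbabilityMeasure (κ t)] :
    IsProbabilityMeasure (uniformMixture κ) where
  measure_univ := by
    simp [uniformMixture, ENNReal.inv_mul_cancel]

lemma le_card_smul_uniformMixture (κ : ι → Measure α) (s : ι) :
    κ s ≤ (Fintype.card ι : ℝ≥0) • uniformMixture κ := by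
  have : Nonempty ι := ⟨s⟩
  have h_sum : (Fintype.card ι : ℝ≥0) • uniformMixture κ = ∑ t, κ t := by
    ext A
    simp [uniformMixture, ENNReal.smul_def, ← mul_assoc, ENNReal.mul_inv_cancel]
  rw [h_sum]
  exact Finset.single_le_sum (fun t _ ↦ Measure.zero_le (κ t)) (Finset.mem_univ s)

lemma absolutelyContinuous_uniformMixture (κ : ι → Measure α) (s : ι) :
    κ s ≪ uniformMixture κ :=
  (Measure.absolutelyContinuous_of_le (le_card_smul_uniformMixture κ s)).trans
    Measure.smul_absolutelyContinuous

lemma uniformMixture_absolutelyContinuous (h : ∀ t, κ t ≪ Q) : uniformMixture κ ≪ Q := by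
  refine Measure.AbsolutelyContinuous.smul_left ?_ _
  intro A hA
  simp [fun t ↦ h t hA]

lemma integral_uniformMixture {f : α → ℝ} (hf : ∀ t, Integrable f (κ t)) :
    ∫ x, f x ∂(uniformMixture κ) = (Fintype.card ι : ℝ)⁻¹ * ∑ t, ∫ x, f x ∂(κ t) := by
  rw [uniformMixture, integral_smul_measure, integral_finsetSum_measure fun t _ ↦ hf t]
  simp

theorem mutualInfoUnif_add_toReal_klDiv_uniformMixture [Nonempty ι]
    [∀ t, IsProbabilityMeasure (κ t)] [IsProbabilityMeasure Q] (h : ∀ t, klDiv (κ t) Q ≠ ∞) :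
    mutualInfoUnif κ + (klDiv (uniformMixture κ) Q).toReal
      = (Fintype.card ι : ℝ)⁻¹ * ∑ t, (klDiv (κ t) Q).toReal := by
  have hκQ t : κ t ≪ Q := (klDiv_ne_top_iff.1 (h t)).1
  have hmix : uniformMixture κ ≪ Q := uniformMixture_absolutelyContinuous hκQ
  have h_chain t := llr_add_llr (absolutelyContinuous_uniformMixture κ t) hmix
  have h_int t : Integrable (llr (κ t) (uniformMixture κ)) (κ t) :=
    integrable_llr_of_le_smul (le_card_smul_uniformMixture κ t)
  have h_int_mix t : Integrable (llr (uniformMixture κ) Q) (κ t) := by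
    refine ((klDiv_ne_top_iff.1 (h t)).2.sub (h_int t)).congr ?_
    filter_upwards [h_chain t] with x hx
    simp [← hx]
  have h_split t : (klDiv (κ t) Q).toReal
      = klDivR (κ t) (uniformMixture κ) + ∫ x, llr (uniformMixture κ) Q x ∂(κ t) := by
    rw [toReal_klDiv_eq_klDivR (hκQ t)]
    exact (integral_congr_ae (h_chain t)).symm.trans (integral_add (h_int t) (h_int_mix t))
  rw [toReal_klDiv_eq_klDivR hmix]
  change _ * ∑ t, klDivR (κ t) (uniformMixture κ) + ∫ x, llr (uniformMixture κ) Q x ∂_ = _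
  simp_rw [h_split, Finset.sum_add_distrib, mul_add, integral_uniformMixture h_int_mix]

theorem mutualInfoUnif_le_of_klDiv_le [∀ t, IsProbabilityMeasure (κ t)] [IsProbabilityMeasure Q]
    {c : ℝ≥0} (h : ∀ t, klDiv (κ t) Q ≤ c) : mutualInfoUnif κ ≤ c := by
  cases isEmpty_or_nonempty ι
  · simp [mutualInfoUnif]
  have h_top t : klDiv (κ t) Q ≠ ∞ := ne_top_of_le_ne_top ENNReal.coe_ne_top (h t)
  calc mutualInfoUnif κ
    _ ≤ mutualInfoUnif κ + (klDiv (uniformMixture κ) Q).toReal :=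
      le_add_of_nonneg_right ENNReal.toReal_nonneg
    _ = (Fintype.card ι : ℝ)⁻¹ * ∑ t, (klDiv (κ t) Q).toReal :=
      mutualInfoUnif_add_toReal_klDiv_uniformMixture h_top
    _ ≤ (Fintype.card ι : ℝ)⁻¹ * ∑ _t : ι, (c : ℝ) := by
      gcongr with t
      exact ENNReal.toReal_mono ENNReal.coe_ne_top (h t)
    _ = c := by simp

end UniformMixture

section Product

open InformationTheory

variable {ι : Type*} [Fintype ι] {α : ι → Type*} [∀ i, MeasurableSpace (α i)]
  {μ ν : ∀ i, Measure (α i)} [∀ i, IsProbabilityMeasure (ν i)]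

lemma lintegral_pi_prod_eq_prod_lintegral {f : ∀ i, α i → ℝ≥0∞} (hf : ∀ i, Measurable (f i)) :
    ∫⁻ x, ∏ i, f i (x i) ∂(Measure.pi ν) = ∏ i, ∫⁻ y, f i y ∂(ν i) := by
  have h_indep : iIndepFun (fun i (x : ∀ i, α i) ↦ f i (x i)) (Measure.pi ν) :=
    iIndepFun_pi fun i ↦ (hf i).aemeasurable
  refine (lintegral_prod_eq_prod_lintegral_of_indepFun Finset.univ _ h_indep fun i ↦
    (hf i).comp (measurable_pi_apply i)).trans ?_
  exact Finset.prod_congr rfl fun i _ ↦ (measurePreserving_eval ν i).lintegral_comp (hf i)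

lemma pi_withDensity {f : ∀ i, α i → ℝ≥0∞} (hf : ∀ i, Measurable (f i))
    [∀ i, SigmaFinite ((ν i).withDensity (f i))] :
    Measure.pi (fun i ↦ (ν i).withDensity (f i))
      = (Measure.pi ν).withDensity fun x ↦ ∏ i, f i (x i) := by
  classical
  refine Measure.pi_eq fun s hs ↦ ?_
  have h_indicator : (Set.univ.pi s).indicator (fun x ↦ ∏ i, f i (x i))
      = fun x ↦ ∏ i, (s i).indicator (f i) (x i) := by
    ext x
    by_cases hx : x ∈ Set.univ.pi s
    · rw [Set.indicator_of_mem hx]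
      exact Finset.prod_congr rfl fun i _ ↦ (Set.indicator_of_mem (hx i trivial) _).symm
    · obtain ⟨i, hi⟩ : ∃ i, x i ∉ s i := by simpa using hx
      rw [Set.indicator_of_notMem hx,
        Finset.prod_eq_zero (Finset.mem_univ i) (Set.indicator_of_notMem hi _)]
  rw [withDensity_apply _ (.univ_pi hs), ← lintegral_indicator (.univ_pi hs), h_indicator,
    lintegral_pi_prod_eq_prod_lintegral fun i ↦ (hf i).indicator (hs i)]
  exact Finset.prod_congr rfl fun i _ ↦ by
    rw [lintegral_indicator (hs i), withDensity_apply _ (hs i)]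

section SigmaFinite

variable [∀ i, SigmaFinite (μ i)]

lemma pi_eq_withDensity_prod_rnDeriv (h : ∀ i, μ i ≪ ν i) :
    Measure.pi μ = (Measure.pi ν).withDensity fun x ↦ ∏ i, (μ i).rnDeriv (ν i) (x i) := by
  rw [← pi_withDensity fun i ↦ Measure.measurable_rnDeriv _ _]
  simp_rw [Measure.withDensity_rnDeriv_eq _ _ (h _)]

lemma pi_absolutelyContinuous_pi (h : ∀ i, μ i ≪ ν i) : Measure.pi μ ≪ Measure.pi ν := by
  rw [pi_eq_withDensity_prod_rnDeriv h]
  exact withDensity_absolutelyContinuous _ _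

lemma llr_pi (h : ∀ i, μ i ≪ ν i) :
    llr (Measure.pi μ) (Measure.pi ν) =ᵐ[Measure.pi μ] fun x ↦ ∑ i, llr (μ i) (ν i) (x i) := by
  have h_rnDeriv : (Measure.pi μ).rnDeriv (Measure.pi ν)
      =ᵐ[Measure.pi ν] fun x ↦ ∏ i, (μ i).rnDeriv (ν i) (x i) := by
    rw [pi_eq_withDensity_prod_rnDeriv h]
    exact Measure.rnDeriv_withDensity _ (by fun_prop)
  have h_pos_coord i : ∀ᵐ y ∂(μ i), 0 < ((μ i).rnDeriv (ν i) y).toReal := by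
    filter_upwards [Measure.rnDeriv_pos (h i), (h i).ae_le (Measure.rnDeriv_lt_top (μ i) (ν i))]
      with y hy_pos hy_top
    exact ENNReal.toReal_pos hy_pos.ne' hy_top.ne
  have h_pos : ∀ᵐ x ∂(Measure.pi μ), ∀ i, 0 < ((μ i).rnDeriv (ν i) (x i)).toReal :=
    ae_all_iff.2 fun i ↦ (Measure.quasiMeasurePreserving_eval μ i).ae (h_pos_coord i)
  filter_upwards [(pi_absolutelyContinuous_pi h).ae_le h_rnDeriv, h_pos] with x hx hx_pos
  simp only [llr, hx, ENNReal.toReal_prod]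
  exact Real.log_prod fun i _ ↦ (hx_pos i).ne'

end SigmaFinite

theorem klDiv_pi [∀ i, IsProbabilityMeasure (μ i)] :
    klDiv (Measure.pi μ) (Measure.pi ν) = ∑ i, klDiv (μ i) (ν i) := by
  by_cases h_top : ∃ i, klDiv (μ i) (ν i) = ∞
  · obtain ⟨i, hi⟩ := h_top
    have h_le : klDiv (μ i) (ν i) ≤ klDiv (Measure.pi μ) (Measure.pi ν) := by
      simpa only [(measurePreserving_eval _ i).map_eq] using
        klDiv_map_le (Measure.pi μ) (Measure.pi ν) (measurable_pi_apply i)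
    rw [hi, top_le_iff] at h_le
    rw [h_le, ENNReal.sum_eq_top.2 ⟨i, Finset.mem_univ i, hi⟩]
  push Not at h_top
  have h_ac i : μ i ≪ ν i := (klDiv_ne_top_iff.1 (h_top i)).1
  have h_int i : Integrable (llr (μ i) (ν i)) (μ i) := (klDiv_ne_top_iff.1 (h_top i)).2
  have h_int_eval i : Integrable (fun x ↦ llr (μ i) (ν i) (x i)) (Measure.pi μ) :=
    integrable_comp_eval (h_int i)
  have h_pi_ne_top : klDiv (Measure.pi μ) (Measure.pi ν) ≠ ∞ :=
    klDiv_ne_top (pi_absolutelyContinuous_pi h_ac)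
      ((integrable_finsetSum _ fun i _ ↦ h_int_eval i).congr (llr_pi h_ac).symm)
  refine (ENNReal.toReal_eq_toReal_iff' h_pi_ne_top
    (ENNReal.sum_ne_top.2 fun i _ ↦ h_top i)).1 ?_
  calc (klDiv (Measure.pi μ) (Measure.pi ν)).toReal
    _ = ∫ x, ∑ i, llr (μ i) (ν i) (x i) ∂(Measure.pi μ) := by
      rw [toReal_klDiv_eq_klDivR (pi_absolutelyContinuous_pi h_ac)]
      exact integral_congr_ae (llr_pi h_ac)
    _ = ∑ i, ∫ y, llr (μ i) (ν i) y ∂(μ i) := by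
      rw [integral_finsetSum _ fun i _ ↦ h_int_eval i]
      exact Finset.sum_congr rfl fun i _ ↦ integral_comp_eval (h_int i).aestronglyMeasurable
    _ = (∑ i, klDiv (μ i) (ν i)).toReal := by
      rw [ENNReal.toReal_sum fun i _ ↦ h_top i]
      exact Finset.sum_congr rfl fun i _ ↦ (toReal_klDiv_eq_klDivR (h_ac i)).symm

end Product

section Gaussian

open InformationTheory

lemma integral_exp_mul_gaussianReal (m : ℝ) (v : ℝ≥0) (t : ℝ) :
    ∫ x, Real.exp (t * x) ∂(gaussianReal m v) = Real.exp (m * t + v * t ^ 2 / 2) :=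
  mgf_gaussianReal (X := id) Measure.map_id t

lemma gaussianReal_tilted_mul (m : ℝ) (v : ℝ≥0) (t : ℝ) :
    (gaussianReal m v).tilted (fun x ↦ t * x) = gaussianReal (m + v * t) v := by
  rcases eq_or_ne v 0 with rfl | hv
  · simp only [NNReal.coe_zero, zero_mul, add_zero, gaussianReal_zero_var]
    exact (tilted_congr (ae_eq_dirac _)).trans (tilted_const _ _)
  have h_pdf x : gaussianPDFReal m v x * (Real.exp (t * x) / Real.exp (m * t + v * t ^ 2 / 2))
      = gaussianPDFReal (m + v * t) v x := by
    rw [gaussianPDFReal, gaussianPDFReal, ← Real.exp_sub, mul_assoc, ← Real.exp_add]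
    congr 2
    field_simp
    ring
  rw [Measure.tilted, integral_exp_mul_gaussianReal, gaussianReal_of_var_ne_zero _ hv,
    gaussianReal_of_var_ne_zero _ hv, ← withDensity_mul _ (by fun_prop) (by fun_prop)]
  congr with x
  rw [Pi.mul_apply, gaussianPDF, gaussianPDF, ← ENNReal.ofReal_mul (gaussianPDFReal_nonneg _ _ _),
    h_pdf]

theorem klDiv_gaussianReal (a b : ℝ) {v : ℝ≥0} (hv : v ≠ 0) :
    klDiv (gaussianReal a v) (gaussianReal b v) = ENNReal.ofReal ((a - b) ^ 2 / (2 * v)) := by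
  have hv' : (v : ℝ) ≠ 0 := by exact_mod_cast hv
  set t : ℝ := (a - b) / v with ht
  have h_tilt : (gaussianReal b v).tilted (fun x ↦ t * x) = gaussianReal a v := by
    rw [gaussianReal_tilted_mul, ht, mul_div_cancel₀ _ hv', add_sub_cancel]
  have h_id : Integrable (fun x : ℝ ↦ x) (gaussianReal a v) :=
    (memLp_id_gaussianReal 1).integrable le_rfl
  have h_kl := klDiv_tilted_self (μ := gaussianReal b v) (f := fun x ↦ t * x)
    (integrable_exp_mul_gaussianReal t) (h_tilt ▸ h_id.const_mul t)
  rw [h_tilt, integral_exp_mul_gaussianReal, Real.log_exp, integral_const_mul,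
    integral_id_gaussianReal] at h_kl
  rw [h_kl, ht]
  congr 1
  field_simp
  ring

end Gaussian

section SupportRecovery

open InformationTheory

open scoped symmDiff

instance isProbabilityMeasure_labeledTildeLaw (p k L : ℕ) (lam : ℝ) (T : Finset (Fin p)) :
    IsProbabilityMeasure (labeledTildeLaw p k L lam T) := by
  unfold labeledTildeLaw
  infer_instance

lemma sum_sq_thetaVec_sub (p k : ℕ) (T U : Finset (Fin p)) :
    ∑ j, (thetaVec p k T j - thetaVec p k U j) ^ 2 = (T ∆ U).card / k := by
  have h_term j : (thetaVec p k T j - thetaVec p k U j) ^ 2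
      = if j ∈ T ∆ U then (k : ℝ)⁻¹ else 0 := by
    by_cases hT : j ∈ T <;> by_cases hU : j ∈ U <;>
      simp [thetaVec, Finset.mem_symmDiff, hT, hU]
  simp_rw [h_term, Finset.sum_ite_mem, Finset.univ_inter, Finset.sum_const, nsmul_eq_mul,
    div_eq_mul_inv]

theorem klDiv_labeledTildeLaw (p k L : ℕ) {lam : ℝ} (hlam : 0 < lam) (T U : Finset (Fin p)) :
    klDiv (labeledTildeLaw p k L lam T) (labeledTildeLaw p k L lam U)
      = ENNReal.ofReal (L * lam * (T ∆ U).card / (2 * k)) := by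
  have hv : Real.toNNReal lam⁻¹ ≠ 0 := by simpa using hlam
  have h_sample : ∑ j, (thetaVec p k T j - thetaVec p k U j) ^ 2 / (2 * lam⁻¹)
      = lam * (T ∆ U).card / (2 * k) := by
    rw [← Finset.sum_div, sum_sq_thetaVec_sub]
    field_simp
  simp_rw [labeledTildeLaw, klDiv_pi, klDiv_gaussianReal _ _ hv,
    Real.coe_toNNReal _ (inv_pos.2 hlam).le]
  rw [← ENNReal.ofReal_sum_of_nonneg fun j _ ↦ by positivity, h_sample, Finset.sum_const,
    Finset.card_univ, Fintype.card_fin, ← ENNReal.ofReal_nsmul, nsmul_eq_mul]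
  congr 1
  ring

/-- The set `{1, …, k-1}` of the paper (`{0, …, k-2}` in `Fin p`), contained in every member of
`stildeF p k`; it supports the centre of the reference law. -/
def commonSupport (p k : ℕ) : Finset (Fin p) :=
  {j | (j : ℕ) < k - 1}

lemma card_symmDiff_commonSupport {p k : ℕ} (hk : 1 ≤ k) {T : Finset (Fin p)}
    (hT : T ∈ stildeF p k) : (T ∆ commonSupport p k).card = 1 := by
  obtain ⟨hT_card, hT_mem⟩ : T.card = k ∧ ∀ i : Fin p, (i : ℕ) < k - 1 → i ∈ T := by
    simpa [stildeF] using hT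
  have h_sub : commonSupport p k ⊆ T := fun i hi ↦ hT_mem i (by simpa [commonSupport] using hi)
  have hkp : k ≤ p := hT_card ▸ card_finset_fin_le T
  have h_card : (commonSupport p k).card = k - 1 := by
    rw [commonSupport, Fin.card_filter_val_lt]
    omega
  rw [symmDiff_of_ge h_sub, Finset.card_sdiff_of_subset h_sub]
  omega

end SupportRecovery

/-- the mutual information between the `L` samples
`x̃ᵢ = θ^S + σξᵢ` (`σ = 1/√λ`) and the support `S`, uniform over `𝕊̃`, satisfies
`I(X^L; S) ≤ Lλ/(2k)`. -/
theorem stmt18 (p k L : ℕ) (lam : ℝ) (hlam : 0 < lam) (hk : 1 ≤ k) (hkp : k ≤ p) :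
    mutualInfoUnif (fun T : {T : Finset (Fin p) // T ∈ stildeF p k} =>
        labeledTildeLaw p k L lam T.1)
      ≤ (L : ℝ) * lam / (2 * k) := by
  have h_nonneg : 0 ≤ (L : ℝ) * lam / (2 * k) := by positivity
  refine (mutualInfoUnif_le_of_klDiv_le (Q := labeledTildeLaw p k L lam (commonSupport p k))
    (c := Real.toNNReal (L * lam / (2 * k))) fun T ↦ ?_).trans_eq (Real.coe_toNNReal _ h_nonneg)
  rw [klDiv_labeledTildeLaw p k L hlam, card_symmDiff_commonSupport hk T.2, Nat.cast_one, mul_one]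
  rfl
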